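/- Let k ≥ 1 and let ρ : {1,...,k} → {0,1,...,k} be a function with ρ(i) ≠ i for all i. Suppose ρ has exactly m pairwise disjoint cycles within {1,...,k}. Then the number of permutations σ ∈ S_k compatible with ρ is exactly 2^m; more precisely, the compatible permutations are in bijection with the subsets T of the set of cycles of ρ, where the permutation corresponding to T acts as the cyclic permutation ρ on the elements of the cycles in T and fixes all other elements of {1,...,k}. -/

import Mathlib

/-!
STATEMENT 5: Counting compatible permutations.

The domain `{1, ..., k}` of `ρ` is modeled by `Fin k` (`i : Fin k` is the paper index
`(i : ℕ) + 1`) and the codomain `{0, 1, ..., k}` by `Fin (k + 1)` (literal value), so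
`ρ(i) ≠ i` reads `(ρ i : ℕ) ≠ (i : ℕ) + 1`, and for `σ ∈ S_k`, "`σ(i) = ρ(i)`" reads
`(σ i : ℕ) + 1 = (ρ i : ℕ)`.  "`ρ` has exactly `m` pairwise disjoint cycles" is stated
as: there is a family `C : Fin m → Finset (Fin k)` of pairwise disjoint cycles of `ρ`
comprising every cycle of `ρ`.  The conclusion gives the count `2 ^ m` together with a
bijection `e` from subsets `T` of the set of cycles to the compatible permutations,
where `e T` acts as `ρ` on the elements of the cycles in `T` and fixes everything else.
-/

/-- `c` is (the underlying set of) a cycle of `ρ` within `{1, ..., k}`: there are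
`l ≥ 2` and distinct elements `i₁, ..., i_l` of `{1, ..., k}` with `ρ(i_j) = i_{j+1}`
cyclically, and `c = {i₁, ..., i_l}`. -/
def IsRhoCycle (k : ℕ) (ρ : Fin k → Fin (k + 1)) (c : Finset (Fin k)) : Prop :=
  ∃ (l : ℕ) (_ : 2 ≤ l) (g : Fin l → Fin k), Function.Injective g ∧
    (∀ j : Fin l,
      (ρ (g j) : ℕ) = (g ⟨((j : ℕ) + 1) % l, Nat.mod_lt _ (by omega)⟩ : ℕ) + 1) ∧
    c = Finset.image g Finset.univ

theorem IsRhoCycle.props {k : ℕ} {ρ : Fin k → Fin (k + 1)} {c : Finset (Fin k)}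
    (h : IsRhoCycle k ρ c) :
    c.Nonempty ∧ (∀ i ∈ c, ∃ j ∈ c, (j : ℕ) + 1 = (ρ i : ℕ)) ∧
      (∀ i ∈ c, ∀ j ∈ c, ρ i = ρ j → i = j) := by
  obtain ⟨l, hl, g, hg, hρ, rfl⟩ := h
  refine ⟨⟨g ⟨0, by omega⟩, by simp⟩, ?_, ?_⟩
  · intro i hi
    simp only [Finset.mem_image, Finset.mem_univ, true_and] at hi
    obtain ⟨a, rfl⟩ := hi
    exact ⟨_, Finset.mem_image_of_mem g (Finset.mem_univ _), (hρ a).symm⟩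
  · intro i hi j hj hij
    simp only [Finset.mem_image, Finset.mem_univ, true_and] at hi hj
    obtain ⟨a, rfl⟩ := hi
    obtain ⟨b, rfl⟩ := hj
    have h1 := hρ a
    rw [hij, hρ b] at h1
    have h2 := hg (Fin.ext (Nat.succ_injective h1))
    have h3 : ((b : ℕ) + 1) % l = ((a : ℕ) + 1) % l := congrArg Fin.val h2
    have h4 : (b : ℕ) ≡ a [MOD l] := Nat.ModEq.add_right_cancel' 1 h3
    have h5 : (b : ℕ) = a := Nat.ModEq.eq_of_lt_of_lt h4 b.2 a.2
    rw [Fin.ext h5]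

theorem exists_cycle_of_moved {k : ℕ} {ρ : Fin k → Fin (k + 1)} (σ : Equiv.Perm (Fin k))
    (hσ : ∀ i : Fin k, σ i = i ∨ (σ i : ℕ) + 1 = (ρ i : ℕ)) (i : Fin k) (hi : σ i ≠ i) :
    ∃ c, IsRhoCycle k ρ c ∧ i ∈ c ∧ ∀ j ∈ c, σ j ≠ j := by
  have hmoved : ∀ n : ℕ, σ (σ^[n] i) ≠ σ^[n] i := by
    intro n h
    rw [← Function.iterate_succ_apply' (f := σ), Function.iterate_succ_apply] at h
    exact hi (σ.injective.iterate n h)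
  have hper : i ∈ Function.periodicPts σ := σ.injective.mem_periodicPts i
  have hpos := Function.minimalPeriod_pos_of_mem_periodicPts hper
  have hne : Function.minimalPeriod σ i ≠ 1 := by
    rw [Ne, Function.minimalPeriod_eq_one_iff_isFixedPt]
    exact hi
  refine ⟨Finset.image (fun j : Fin (Function.minimalPeriod σ i) => σ^[(j : ℕ)] i) Finset.univ,
    ⟨_, by omega, _, ?_, ?_, rfl⟩, ?_, ?_⟩
  · intro a b hab
    exact Fin.ext (Function.iterate_injOn_Iio_minimalPeriod a.2 b.2 hab)
  · intro j
    have h := (hσ (σ^[(j : ℕ)] i)).resolve_left (hmoved j)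
    simp only [Function.iterate_mod_minimalPeriod_eq, Function.iterate_succ_apply']
    exact h.symm
  · exact Finset.mem_image.2 ⟨⟨0, hpos⟩, Finset.mem_univ _, rfl⟩
  · intro j hj
    obtain ⟨a, -, rfl⟩ := Finset.mem_image.1 hj
    exact hmoved a

theorem compatible_count (k m : ℕ) (hk : 1 ≤ k) (ρ : Fin k → Fin (k + 1))
    (hρ : ∀ i : Fin k, (ρ i : ℕ) ≠ (i : ℕ) + 1)
    (C : Fin m → Finset (Fin k))
    (hcyc : ∀ t : Fin m, IsRhoCycle k ρ (C t))
    (hdisj : ∀ s t : Fin m, s ≠ t → Disjoint (C s) (C t))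
    (hall : ∀ c : Finset (Fin k), IsRhoCycle k ρ c → ∃ t : Fin m, c = C t) :
    (Finset.univ.filter (fun σ : Equiv.Perm (Fin k) =>
        ∀ i : Fin k, σ i = i ∨ (σ i : ℕ) + 1 = (ρ i : ℕ))).card = 2 ^ m ∧
    ∃ e : Finset (Fin m) ≃
        {σ : Equiv.Perm (Fin k) // ∀ i : Fin k, σ i = i ∨ (σ i : ℕ) + 1 = (ρ i : ℕ)},
      ∀ (T : Finset (Fin m)) (i : Fin k),
        if ∃ t ∈ T, i ∈ C t then ((e T).1 i : ℕ) + 1 = (ρ i : ℕ)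
        else (e T).1 i = i := by
  have hex : ∀ (T : Finset (Fin m)),
      ∃ σ : {σ : Equiv.Perm (Fin k) // ∀ i : Fin k, σ i = i ∨ (σ i : ℕ) + 1 = (ρ i : ℕ)},
        ∀ i, ((∃ t ∈ T, i ∈ C t) → (σ.1 i : ℕ) + 1 = (ρ i : ℕ)) ∧
          ((¬ ∃ t ∈ T, i ∈ C t) → σ.1 i = i) := by
    intro T
    have hf : ∀ i, ∃ j : Fin k, (∀ t ∈ T, i ∈ C t → j ∈ C t ∧ (j : ℕ) + 1 = (ρ i : ℕ)) ∧
        ((¬ ∃ t ∈ T, i ∈ C t) → j = i) := by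
      intro i
      by_cases h : ∃ t ∈ T, i ∈ C t
      · obtain ⟨t, ht, hit⟩ := h
        obtain ⟨j, hj, hji⟩ := (hcyc t).props.2.1 i hit
        refine ⟨j, ?_, fun h => absurd ⟨t, ht, hit⟩ h⟩
        intro s hs his
        have : s = t := by
          by_contra hst
          exact Finset.disjoint_left.1 (hdisj s t hst) his hit
        subst this
        exact ⟨hj, hji⟩
      · exact ⟨i, fun t ht hit => absurd ⟨t, ht, hit⟩ h, fun _ => rfl⟩
    choose f hf1 hf2 using hf
    have hinj : Function.Injective f := by
      intro a b hab
      by_cases ha : ∃ t ∈ T, a ∈ C t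
      · obtain ⟨t, ht, hat⟩ := ha
        by_cases hb : ∃ t ∈ T, b ∈ C t
        · obtain ⟨s, hs, hbs⟩ := hb
          have h1 := hf1 a t ht hat
          have h2 := hf1 b s hs hbs
          rw [hab] at h1
          have : s = t := by
            by_contra hst
            exact Finset.disjoint_left.1 (hdisj s t hst) h2.1 h1.1
          subst this
          exact (hcyc s).props.2.2 a hat b hbs (Fin.ext (h1.2.symm.trans h2.2))
        · have h1 := hf1 a t ht hat
          rw [hab, hf2 b hb] at h1
          exact absurd ⟨t, ht, h1.1⟩ hb
      · by_cases hb : ∃ t ∈ T, b ∈ C t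
        · obtain ⟨s, hs, hbs⟩ := hb
          have h1 := hf1 b s hs hbs
          rw [← hab, hf2 a ha] at h1
          exact absurd ⟨s, hs, h1.1⟩ ha
        · rw [hf2 a ha, hf2 b hb] at hab
          exact hab
    refine ⟨⟨Equiv.ofBijective f (Finite.injective_iff_bijective.1 hinj), ?_⟩, ?_⟩
    · intro i
      by_cases h : ∃ t ∈ T, i ∈ C t
      · obtain ⟨t, ht, hit⟩ := h
        exact Or.inr (hf1 i t ht hit).2
      · exact Or.inl (hf2 i h)
    · intro i
      refine ⟨?_, hf2 i⟩
      rintro ⟨t, ht, hit⟩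
      exact (hf1 i t ht hit).2
  choose F hF using hex
  have hmv : ∀ T i, (F T).1 i ≠ i ↔ ∃ t ∈ T, i ∈ C t := by
    intro T i
    constructor
    · intro h
      by_contra h'
      exact h ((hF T i).2 h')
    · intro h h'
      have := (hF T i).1 h
      rw [h'] at this
      exact hρ i this.symm
  have hFinj : Function.Injective F := by
    have key : ∀ S T, F S = F T → S ⊆ T := by
      intro S T hST s hs
      obtain ⟨i, hi⟩ := (hcyc s).props.1
      have h1 := (hmv S i).2 ⟨s, hs, hi⟩
      rw [hST] at h1
      obtain ⟨t, ht, hit⟩ := (hmv T i).1 h1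
      have : s = t := by
        by_contra hst
        exact Finset.disjoint_left.1 (hdisj s t hst) hi hit
      exact this ▸ ht
    intro S T h
    exact Finset.Subset.antisymm (key S T h) (key T S h.symm)
  have hFsurj : Function.Surjective F := by
    intro σ
    classical
    refine ⟨Finset.univ.filter (fun t => ∀ i ∈ C t, σ.1 i ≠ i), ?_⟩
    apply Subtype.ext
    apply Equiv.ext
    intro i
    by_cases h : σ.1 i = i
    · rw [h]
      apply (hF _ i).2
      rintro ⟨t, ht, hit⟩
      exact (Finset.mem_filter.1 ht).2 i hit h
    · obtain ⟨c, hc, hic, hcm⟩ := exists_cycle_of_moved σ.1 σ.2 i h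
      obtain ⟨t, rfl⟩ := hall c hc
      have h1 := (hF (Finset.univ.filter (fun t => ∀ i ∈ C t, σ.1 i ≠ i)) i).1
        ⟨t, Finset.mem_filter.2 ⟨Finset.mem_univ _, hcm⟩, hic⟩
      have h2 := (σ.2 i).resolve_left h
      exact Fin.ext (Nat.succ_injective (h1.trans h2.symm))
  let e := Equiv.ofBijective F ⟨hFinj, hFsurj⟩
  refine ⟨?_, e, ?_⟩
  · rw [← Fintype.card_subtype, ← Fintype.card_congr e]
    simp
  · intro T i
    split_ifs with h
    · exact (hF T i).1 h
    · exact (hF T i).2 h
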